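/- Multizip commutes with draw-and-delete: for all multisets m : Sym X (K+1) and n : Sym Y (K+1), (mzip m n).bind DD = (DD m).bind (fun m' => (DD n).bind (fun n' => mzip m' n')), as distributions on Sym (X × Y) K. -/

import Mathlib

universe u

/-- Accumulation: send a tuple to its multiset of values. -/
def acc {X : Type u} {K : ℕ} (v : Fin K → X) : Sym X K :=
  ⟨(List.ofFn v : List X), by simp⟩

/-- Pushforward of the uniform distribution on permutations under `σ ↦ v ∘ σ`. -/
noncomputable def perm {X : Type u} {K : ℕ} (v : Fin K → X) : PMF (Fin K → X) :=
  PMF.map (fun σ => v ∘ σ) (PMF.uniformOfFintype (Equiv.Perm (Fin K)))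

/-- Uniform deletion of one coordinate: pushforward of the uniform distribution
on `Fin (K+1)` under `i ↦ v ∘ Fin.succAbove i`. -/
noncomputable def del {X : Type u} {K : ℕ} (v : Fin (K + 1) → X) : PMF (Fin K → X) :=
  PMF.map (fun i => v ∘ Fin.succAbove i) (PMF.uniformOfFintype (Fin (K + 1)))

/-!
If `a` is a uniformly random arrangement of a multiset of size `K + 1`, then for every fixed index
`i` the tuple `a ∘ i.succAbove` is a uniformly random arrangement of the multiset after one draw:
a permutation `σ` amounts to its value `p` at `i` together with a permutation of the remaining
`K` points, and `p` is uniform. Conditionally on the position `i` deleted from the zipped tuple,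
both components therefore undergo independent draw-and-delete followed by arrangement; as this
distribution does not depend on `i`, averaging over `i` changes nothing.
-/

theorem acc_surjective {X : Type u} {K : ℕ} :
    Function.Surjective (acc : (Fin K → X) → Sym X K) := by
  rintro ⟨⟨l⟩, rfl⟩
  exact ⟨l.get, Subtype.ext (congrArg Multiset.ofList (List.ofFn_get l))⟩

section Uniform

variable {α β : Type*} [Fintype α] [Nonempty α] [Fintype β] [Nonempty β]

theorem map_equiv_uniformOfFintype (e : α ≃ β) :
    (PMF.uniformOfFintype α).map e = PMF.uniformOfFintype β := by
  classical
  ext b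
  simp [PMF.map_apply, ← e.symm_apply_eq, Fintype.card_congr e]

variable (α β) in
theorem bind_map_prodMk_uniformOfFintype :
    ((PMF.uniformOfFintype α).bind fun a => (PMF.uniformOfFintype β).map (Prod.mk a)) =
      PMF.uniformOfFintype (α × β) := by
  classical
  ext ⟨a, b⟩
  simp [PMF.map_apply, ENNReal.mul_inv, ite_and, Finset.sum_ite_irrel]

end Uniform

/-- The permutations of `Fin (K + 1)`, parametrized by the image `p` of a fixed index `i` and the
permutation of `Fin K` induced on the complements of `i` and `p`, each identified with `Fin K` in
increasing order; this is what makes a uniform permutation uniform again off a fixed index. -/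
def permSuccEquiv {K : ℕ} (i : Fin (K + 1)) :
    Fin (K + 1) × Equiv.Perm (Fin K) ≃ Equiv.Perm (Fin (K + 1)) where
  toFun q := (finSuccEquiv' i).trans (q.2.optionCongr.trans (finSuccEquiv' q.1).symm)
  invFun σ := (σ i,
    Equiv.removeNone ((finSuccEquiv' i).symm.trans (σ.trans (finSuccEquiv' (σ i)))))
  left_inv := by
    rintro ⟨p, e⟩
    simp [Equiv.trans_assoc, ← Equiv.trans_assoc (finSuccEquiv' i).symm]
  right_inv σ := by
    ext j
    simp

theorem permSuccEquiv_comp_succAbove {K : ℕ} (i p : Fin (K + 1)) (e : Equiv.Perm (Fin K)) :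
    permSuccEquiv i (p, e) ∘ i.succAbove = p.succAbove ∘ e := by
  ext j
  simp [permSuccEquiv]

theorem uniformOfFintype_perm_succ {K : ℕ} (i : Fin (K + 1)) :
    PMF.uniformOfFintype (Equiv.Perm (Fin (K + 1))) =
      (PMF.uniformOfFintype (Fin (K + 1))).bind fun p =>
        (PMF.uniformOfFintype (Equiv.Perm (Fin K))).map fun e => permSuccEquiv i (p, e) := by
  rw [← map_equiv_uniformOfFintype (permSuccEquiv i), ← bind_map_prodMk_uniformOfFintype,
    PMF.map_bind]
  simp only [PMF.map_comp, Function.comp_def]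

-- In `perm`, the uniform distribution is coerced to a `PMF (Fin K → Fin K)` by a monadic bind.
theorem perm_eq_map_uniformOfFintype {X : Type u} {K : ℕ} (v : Fin K → X) :
    perm v =
      (PMF.uniformOfFintype (Equiv.Perm (Fin K))).map fun σ : Equiv.Perm (Fin K) => v ∘ σ :=
  PMF.map_comp _ _ _

theorem map_comp_succAbove_perm {X : Type u} {K : ℕ} (i : Fin (K + 1)) (v : Fin (K + 1) → X) :
    (perm v).map (· ∘ i.succAbove) = (del v).bind perm :=
  calc
    _ = (PMF.uniformOfFintype (Fin (K + 1))).bind fun p =>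
          (PMF.uniformOfFintype (Equiv.Perm (Fin K))).map fun e =>
            v ∘ (permSuccEquiv i (p, e) ∘ i.succAbove) := by
      rw [perm_eq_map_uniformOfFintype, uniformOfFintype_perm_succ i]
      simp only [PMF.map_bind, PMF.map_comp, Function.comp_def]
    _ = (PMF.uniformOfFintype (Fin (K + 1))).bind fun p => perm (v ∘ p.succAbove) := by
      simp only [permSuccEquiv_comp_succAbove, perm_eq_map_uniformOfFintype, Function.comp_assoc]
    _ = (del v).bind perm := by
      rw [del, PMF.bind_map, Function.comp_def]

theorem bind_perm_bind_perm_del_zip {X Y : Type*} {K : ℕ}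
    (v : Fin (K + 1) → X) (w : Fin (K + 1) → Y) :
    ((perm v).bind fun a => (perm w).bind fun b => del fun i => (a i, b i)) =
      (del v).bind fun v' => (del w).bind fun w' =>
        (perm v').bind fun a => (perm w').map fun b i => (a i, b i) :=
  calc
    _ = (PMF.uniformOfFintype (Fin (K + 1))).bind fun i =>
          ((perm v).map (· ∘ i.succAbove)).bind fun a =>
            ((perm w).map (· ∘ i.succAbove)).map fun b j => (a j, b j) := by
      simp only [del, PMF.map, PMF.bind_bind, PMF.pure_bind, Function.comp_def,
        PMF.bind_comm _ (PMF.uniformOfFintype (Fin (K + 1)))]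
    _ = ((del v).bind perm).bind fun a => ((del w).bind perm).map fun b i => (a i, b i) := by
      simp only [map_comp_succAbove_perm, PMF.bind_const]
    _ = _ := by
      simp only [PMF.bind_bind, PMF.map_bind]
      exact congrArg _ (funext fun v' => PMF.bind_comm _ _ _)

/-- Multizip commutes with draw-and-delete, where
`mzip m n = (arr m).bind (fun a => PMF.map (fun b => acc (fun i => (a i, b i))) (arr n))`
and `DD` is draw-and-delete, the unique map with `DD (acc v) = PMF.map acc (del v)`. -/
theorem mzip_DD {X Y : Type u} {K : ℕ}
    (arr : {Z : Type u} → {n : ℕ} → Sym Z n → PMF (Fin n → Z))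
    (harr : ∀ {Z : Type u} {n : ℕ} (v : Fin n → Z), arr (acc v) = perm v)
    (DD : {Z : Type u} → Sym Z (K + 1) → PMF (Sym Z K))
    (hDD : ∀ {Z : Type u} (v : Fin (K + 1) → Z), DD (acc v) = PMF.map acc (del v))
    (m : Sym X (K + 1)) (n : Sym Y (K + 1)) :
    ((arr m).bind (fun a => PMF.map (fun b => acc (fun i => (a i, b i))) (arr n))).bind DD =
      (DD m).bind (fun m' => (DD n).bind (fun n' =>
        (arr m').bind (fun a => PMF.map (fun b => acc (fun i => (a i, b i))) (arr n')))) := by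
  obtain ⟨v, rfl⟩ := acc_surjective m
  obtain ⟨w, rfl⟩ := acc_surjective n
  calc
    _ = ((perm v).bind fun a => (perm w).bind fun b => del fun i => (a i, b i)).map acc := by
      simp only [harr, hDD, PMF.bind_bind, PMF.bind_map, PMF.map_bind, Function.comp_def]
    _ = ((del v).bind fun v' => (del w).bind fun w' =>
          (perm v').bind fun a => (perm w').map fun b i => (a i, b i)).map acc := by
      rw [bind_perm_bind_perm_del_zip]
    _ = _ := by
      simp only [harr, hDD, PMF.bind_map, PMF.map_bind, PMF.map_comp, Function.comp_def]
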